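/- Let C be a class of binary classifiers on a countable domain X with VC dimension d ≥ 2, let n ≥ 1, T ≥ 1, δ ∈ (0,1], let P be a probability distribution on X, and let α ≥ (8/n)·(d(T+1)·ln(2n) + ln(8/δ)). Then the probability over x ∼ P^n that there exist h ∈ C and c = (c_1,…,c_T) ∈ C^T with rej_P(S(h,c)) > 2α and rej_x(S(h,c)) ≤ α is at most δ. -/

import Mathlib

open MeasureTheory

/-- A finite set `A` is shattered by `C` if every boolean labeling of `A` is
realized by some member of `C`. -/
def Shatters {X : Type*} (C : Set (X → Bool)) (A : Finset X) : Prop :=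
  ∀ b : X → Bool, ∃ g ∈ C, ∀ a ∈ A, g a = b a

/-- `C` has VC dimension `d`: some set of size `d` is shattered and no larger set is. -/
def VCDim {X : Type*} (C : Set (X → Bool)) (d : ℕ) : Prop :=
  (∃ A : Finset X, A.card = d ∧ Shatters C A) ∧ ∀ A : Finset X, Shatters C A → A.card ≤ d

/-
The argument is a symmetrisation with exponential weights. Fix `0 ≤ t ≤ 1`. Give a pair of samples
`x, y : ι → X` and a set `R` the weight `∏ i, (1 - t 1_R(x i)) * (1 + t 1_R(y i))`. Swapping `x i`
and `y i` independently with probability `1/2` gives it mean at most `1`, because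
`(1 - a)(1 + b) + (1 - b)(1 + a) = 2 - 2ab`; hence the supremum of the weights over a family of sets
has mean at most the number of traces of the family on the `2n` sample points. If on the other hand
some `R` of the family has `P R > 2α` but contains at most `α n` of the points `x i`, then averaging
its weight over `y` alone gives at least `(1 - t) ^ (α n) * (1 + 2αt) ^ n`, which for `t = 1/3`
is at least `exp (α n / 7)`. For the complements of agreement sets, Sauer–Shelah bounds the number
of traces by `(2n + 1) ^ (d (T + 1))`.
-/

open scoped ENNReal NNReal Finset

section SauerShelah

variable {X ι : Type*} {d : ℕ}

lemma sum_choose_le_add_one_pow (m d : ℕ) : ∑ k ∈ Finset.Iic d, m.choose k ≤ (m + 1) ^ d := by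
  rw [add_pow, Nat.range_succ_eq_Iic]
  refine Finset.sum_le_sum fun k hk => ?_
  calc m.choose k ≤ m ^ k * 1 := by simpa only [mul_one] using m.choose_le_pow k
    _ ≤ m ^ k * d.choose k := by gcongr; exact Nat.choose_pos (Finset.mem_Iic.1 hk)
    _ = m ^ k * 1 ^ (d - k) * d.choose k := by rw [one_pow, mul_one]

lemma shatters_of_finset_shatters [DecidableEq ι] {D : Set (ι → Bool)}
    {𝒜 : Finset (Finset ι)} {B : Finset ι}
    (h𝒜 : ∀ A ∈ 𝒜, ∃ g ∈ D, ∀ i, i ∈ A ↔ g i = true) (hB : 𝒜.Shatters B) : Shatters D B := by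
  intro b
  obtain ⟨A, hA, hBA⟩ := hB (B.filter_subset (b · = true))
  obtain ⟨g, hg, hgA⟩ := h𝒜 A hA
  refine ⟨g, hg, fun i hi => Bool.eq_iff_iff.2 ?_⟩
  simpa [hi, hgA] using congrArg (i ∈ ·) hBA

lemma ncard_le_of_forall_shatters [Fintype ι] {D : Set (ι → Bool)}
    (hD : ∀ A : Finset ι, Shatters D A → #A ≤ d) : D.ncard ≤ (Fintype.card ι + 1) ^ d := by
  classical
  let trueSet : (ι → Bool) → Finset ι := fun g => {i | g i = true}
  let 𝒜 : Finset (Finset ι) := D.toFinite.toFinset.image trueSet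
  have trueSet_injective : trueSet.Injective := fun g g' h =>
    funext fun i => Bool.eq_iff_iff.2 <| by simpa [trueSet] using congrArg (i ∈ ·) h
  have trueSet_mem : ∀ A ∈ 𝒜, ∃ g ∈ D, ∀ i, i ∈ A ↔ g i = true := by
    simp only [𝒜, Finset.mem_image, Set.Finite.mem_toFinset]
    rintro _ ⟨g, hg, rfl⟩
    exact ⟨g, hg, by simp [trueSet]⟩
  have vcDim_le : 𝒜.vcDim ≤ d := Finset.sup_le fun B hB => hD B <|
    shatters_of_finset_shatters trueSet_mem (Finset.mem_shatterer.1 hB)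
  calc D.ncard = #𝒜 := by
        rw [Finset.card_image_of_injective _ trueSet_injective, Set.ncard_eq_toFinset_card]
    _ ≤ ∑ k ∈ Finset.Iic 𝒜.vcDim, (Fintype.card ι).choose k :=
        𝒜.card_le_card_shatterer.trans Finset.card_shatterer_le_sum_vcDim
    _ ≤ ∑ k ∈ Finset.Iic d, (Fintype.card ι).choose k := by gcongr
    _ ≤ (Fintype.card ι + 1) ^ d := sum_choose_le_add_one_pow _ _

lemma Shatters.of_restrict {C : Set (X → Bool)} {A : Finset X} {B : Finset A}
    (h : Shatters (A.restrict '' C) B) : Shatters C (B.map (.subtype (· ∈ A))) := by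
  intro b
  obtain ⟨_, ⟨g, hg, rfl⟩, hgb⟩ := h (A.restrict b)
  refine ⟨g, hg, fun a ha => ?_⟩
  obtain ⟨i, hi, rfl⟩ := Finset.mem_map.1 ha
  exact hgb i hi

lemma ncard_restrict_image_le {C : Set (X → Bool)}
    (hC : ∀ A : Finset X, Shatters C A → #A ≤ d) (A : Finset X) :
    (A.restrict '' C).ncard ≤ (#A + 1) ^ d := by
  rw [← Fintype.card_coe A]
  refine ncard_le_of_forall_shatters fun B hB => ?_
  simpa only [Finset.card_map] using hC _ hB.of_restrict

end SauerShelah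

section AgreementSet

variable {X τ : Type*}

/-- The set `S(h, c)` of points on which the classifier `h` agrees with every `c j`. -/
def agreementSet (h : X → Bool) (c : τ → X → Bool) : Set X := {x | ∀ j, c j x = h x}

/-- The family of the rejection regions, the complements of the agreement sets `S(h, c)` with `h`
and all `c j`, `j : τ`, in the class `C`. -/
def rejectionRegions (C : Set (X → Bool)) (τ : Type*) : Set (Set X) :=
  {R | ∃ h ∈ C, ∃ c : τ → X → Bool, (∀ j, c j ∈ C) ∧ R = (agreementSet h c)ᶜ}

lemma exists_mem_rejectionRegions {C : Set (X → Bool)} {p : Set X → Prop} :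
    (∃ R ∈ rejectionRegions C τ, p R) ↔
      ∃ h ∈ C, ∃ c : τ → X → Bool, (∀ j, c j ∈ C) ∧ p (agreementSet h c)ᶜ := by
  constructor
  · rintro ⟨_, ⟨h, hh, c, hc, rfl⟩, hp⟩
    exact ⟨h, hh, c, hc, hp⟩
  · rintro ⟨h, hh, c, hc, hp⟩
    exact ⟨_, ⟨h, hh, c, hc, rfl⟩, hp⟩

/-- The family of the traces on `A` of the members of `𝓡`; its cardinality is what the growth
function of `𝓡` bounds. -/
def traces (𝓡 : Set (Set X)) (A : Finset X) : Set (Set X) := (· ∩ (A : Set X)) '' 𝓡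

lemma finite_traces (𝓡 : Set (Set X)) (A : Finset X) : (traces 𝓡 A).Finite :=
  A.finite_toSet.finite_subsets.subset <| Set.image_subset_iff.2 fun _ _ => Set.inter_subset_right

lemma ncard_traces_rejectionRegions_le [Fintype τ] (C : Set (X → Bool)) (A : Finset X) :
    (traces (rejectionRegions C τ) A).ncard ≤
      (A.restrict '' C).ncard ^ (Fintype.card τ + 1) := by
  let K := A.restrict '' C
  let region : K × (τ → K) → Set X := fun k => (↑) '' (agreementSet k.1.1 fun j => (k.2 j).1)ᶜ
  have traces_subset : traces (rejectionRegions C τ) A ⊆ Set.range region := by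
    rintro _ ⟨_, ⟨h, hh, c, hc, rfl⟩, rfl⟩
    refine ⟨⟨⟨A.restrict h, h, hh, rfl⟩, fun j => ⟨A.restrict (c j), c j, hc j, rfl⟩⟩, ?_⟩
    ext x
    simp [region, agreementSet, and_comm]
  calc (traces (rejectionRegions C τ) A).ncard ≤ (Set.range region).ncard :=
        Set.ncard_le_ncard traces_subset
    _ ≤ Nat.card (K × (τ → K)) := Finite.card_range_le region
    _ = K.ncard ^ (Fintype.card τ + 1) := by
        rw [Nat.card_prod, Nat.card_fun, Nat.card_eq_fintype_card (α := τ), pow_succ']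
        rfl

lemma ncard_traces_rejectionRegions_le_pow [Fintype τ] {C : Set (X → Bool)} {d n : ℕ}
    (hC : ∀ A : Finset X, Shatters C A → #A ≤ d) {A : Finset X} (hA : #A ≤ n) :
    (traces (rejectionRegions C τ) A).ncard ≤ (n + 1) ^ (d * (Fintype.card τ + 1)) :=
  calc (traces (rejectionRegions C τ) A).ncard
      ≤ (A.restrict '' C).ncard ^ (Fintype.card τ + 1) := ncard_traces_rejectionRegions_le C A
    _ ≤ ((#A + 1) ^ d) ^ (Fintype.card τ + 1) := by gcongr; exact ncard_restrict_image_le hC A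
    _ ≤ (n + 1) ^ (d * (Fintype.card τ + 1)) := by rw [← pow_mul]; gcongr

end AgreementSet

section Symmetrization

variable {X ι : Type*}

/-- Exchanges the two members of the `i`-th pair of the double sample `z` whenever `σ i` holds. -/
def swapPairs (σ : ι → Bool) (z : ι → X × X) : ι → X × X :=
  fun i => if σ i then (z i).swap else z i

lemma measurePreserving_swapPairs [Fintype ι] [MeasurableSpace X] (P : Measure X) [SigmaFinite P]
    (σ : ι → Bool) :
    MeasurePreserving (swapPairs σ) (.pi fun _ => P.prod P) (.pi fun _ => P.prod P) := by
  refine measurePreserving_pi (f := fun i (p : X × X) => if σ i then p.swap else p) _ _ fun i => ?_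
  cases σ i
  · exact .id _
  · exact Measure.measurePreserving_swap

lemma lintegral_le_of_sum_swapPairs_le [Fintype ι] [DecidableEq ι] [MeasurableSpace X]
    (P : Measure X) [IsProbabilityMeasure P] {F : (ι → X × X) → ℝ≥0∞} (hF : Measurable F) {K : ℝ≥0∞}
    (hK : ∀ z, ∑ σ, F (swapPairs σ z) ≤ 2 ^ Fintype.card ι * K) :
    ∫⁻ z, F z ∂(.pi fun _ => P.prod P) ≤ K := by
  have hσ := measurePreserving_swapPairs (ι := ι) P
  suffices 2 ^ Fintype.card ι * ∫⁻ z, F z ∂(.pi fun _ => P.prod P) ≤ 2 ^ Fintype.card ι * K from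
    (ENNReal.mul_le_mul_iff_right (by simp) (by finiteness)).1 this
  calc 2 ^ Fintype.card ι * ∫⁻ z, F z ∂(.pi fun _ => P.prod P)
      = ∑ σ, ∫⁻ z, F (swapPairs σ z) ∂(.pi fun _ => P.prod P) := by
        simp [(hσ _).lintegral_comp hF]
    _ = ∫⁻ z, ∑ σ, F (swapPairs σ z) ∂(.pi fun _ => P.prod P) :=
        (lintegral_finsetSum _ fun σ _ => hF.comp (hσ σ).measurable).symm
    _ ≤ ∫⁻ _, 2 ^ Fintype.card ι * K ∂(.pi fun _ => P.prod P) := lintegral_mono fun z => hK z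
    _ = 2 ^ Fintype.card ι * K := by simp

end Symmetrization

section Weight

variable {X ι : Type*} [Fintype ι] {t : ℝ≥0}

/-- The weight `∏ i, (1 - t 1_R(x i)) * (1 + t 1_R(y i))` of the set `R` on the double sample
`z i = (x i, y i)`: it is large when `R` contains few of the `x i` and many of the `y i`. The
subtraction is truncated and is meant for `t ≤ 1`. -/
noncomputable def doubleSampleWeight (t : ℝ≥0) (R : Set X) (z : ι → X × X) : ℝ≥0∞ :=
  ∏ i, (((1 - R.indicator (fun _ => t) (z i).1) * (1 + R.indicator (fun _ => t) (z i).2) : ℝ≥0) :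
    ℝ≥0∞)

lemma one_sub_mul_one_add_add_le_two {a b : ℝ≥0} (ha : a ≤ 1) (hb : b ≤ 1) :
    (1 - a) * (1 + b) + (1 - b) * (1 + a) ≤ 2 := by
  rw [← NNReal.coe_le_coe]
  push_cast [NNReal.coe_sub ha, NNReal.coe_sub hb]
  linarith [mul_nonneg a.coe_nonneg b.coe_nonneg]

lemma sum_doubleSampleWeight_swapPairs_le [DecidableEq ι] (ht : t ≤ 1) (R : Set X) (z : ι → X × X) :
    ∑ σ, doubleSampleWeight t R (swapPairs σ z) ≤ 2 ^ Fintype.card ι := by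
  let f : X → ℝ≥0 := R.indicator fun _ => t
  let w : X × X → ℝ≥0 := fun p => (1 - f p.1) * (1 + f p.2)
  have f_le_one : ∀ x, f x ≤ 1 := fun x => Set.indicator_le' (fun _ _ => ht) (fun _ _ => zero_le) x
  have key : ∑ σ, ∏ i, w (swapPairs σ z i) ≤ 2 ^ Fintype.card ι := by
    calc ∑ σ, ∏ i, w (swapPairs σ z i)
        = ∏ i, ∑ s : Bool, w (if s then (z i).swap else z i) :=
          (Fintype.prod_sum fun i (s : Bool) => w (if s then (z i).swap else z i)).symm
      _ ≤ ∏ _i : ι, 2 := by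
          refine Finset.prod_le_prod' fun i _ => ?_
          simpa [w, add_comm] using
            one_sub_mul_one_add_add_le_two (f_le_one (z i).1) (f_le_one (z i).2)
      _ = 2 ^ Fintype.card ι := by simp
  simpa [doubleSampleWeight, w, f] using ENNReal.coe_le_coe.2 key

lemma doubleSampleWeight_inter {R A : Set X} {z : ι → X × X} (hz : ∀ i, (z i).1 ∈ A ∧ (z i).2 ∈ A) :
    doubleSampleWeight t (R ∩ A) z = doubleSampleWeight t R z := by
  simp [doubleSampleWeight, Set.inter_comm R A, ← Set.indicator_indicator, hz]

lemma iSup_doubleSampleWeight_le_sum_traces (𝓡 : Set (Set X)) {A : Finset X} {z : ι → X × X}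
    (hz : ∀ i, (z i).1 ∈ A ∧ (z i).2 ∈ A) :
    ⨆ R ∈ 𝓡, doubleSampleWeight t R z ≤
      ∑ S ∈ (finite_traces 𝓡 A).toFinset, doubleSampleWeight t S z := by
  refine iSup₂_le fun R hR => ?_
  rw [← doubleSampleWeight_inter hz]
  exact Finset.single_le_sum_of_canonicallyOrdered (f := fun S => doubleSampleWeight t S z)
    ((finite_traces 𝓡 A).mem_toFinset.2 ⟨R, hR, rfl⟩)

lemma sum_iSup_doubleSampleWeight_swapPairs_le [DecidableEq ι] (ht : t ≤ 1) {𝓡 : Set (Set X)}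
    {N : ℕ} (hN : ∀ A : Finset X, #A ≤ 2 * Fintype.card ι → (traces 𝓡 A).ncard ≤ N)
    (z : ι → X × X) :
    ∑ σ, ⨆ R ∈ 𝓡, doubleSampleWeight t R (swapPairs σ z) ≤ 2 ^ Fintype.card ι * N := by
  classical
  let A : Finset X := Finset.univ.image (fun i => (z i).1) ∪ Finset.univ.image (fun i => (z i).2)
  have hz : ∀ σ i, (swapPairs σ z i).1 ∈ A ∧ (swapPairs σ z i).2 ∈ A := by
    intro σ i
    cases hσ : σ i <;> simp [A, swapPairs, hσ]
  have hA : #A ≤ 2 * Fintype.card ι := by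
    rw [two_mul]
    exact (Finset.card_union_le _ _).trans (add_le_add Finset.card_image_le Finset.card_image_le)
  let 𝓢 := (finite_traces 𝓡 A).toFinset
  calc ∑ σ, ⨆ R ∈ 𝓡, doubleSampleWeight t R (swapPairs σ z)
      ≤ ∑ σ, ∑ S ∈ 𝓢, doubleSampleWeight t S (swapPairs σ z) :=
        Finset.sum_le_sum fun σ _ => iSup_doubleSampleWeight_le_sum_traces 𝓡 (hz σ)
    _ = ∑ S ∈ 𝓢, ∑ σ, doubleSampleWeight t S (swapPairs σ z) := Finset.sum_comm
    _ ≤ ∑ _S ∈ 𝓢, 2 ^ Fintype.card ι :=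
        Finset.sum_le_sum fun S _ => sum_doubleSampleWeight_swapPairs_le ht S z
    _ = 2 ^ Fintype.card ι * #𝓢 := by rw [Finset.sum_const, nsmul_eq_mul, mul_comm]
    _ ≤ 2 ^ Fintype.card ι * N := by
        gcongr
        exact (Set.ncard_eq_toFinset_card _ (finite_traces 𝓡 A)).ge.trans (hN A hA)

lemma lintegral_prod_pi_const [MeasurableSpace X] (P : Measure X) [IsProbabilityMeasure P]
    {f : X → ℝ≥0∞} (hf : Measurable f) :
    ∫⁻ y, ∏ i : ι, f (y i) ∂(.pi fun _ => P) = (∫⁻ a, f a ∂P) ^ Fintype.card ι := by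
  have indep : ProbabilityTheory.iIndepFun (fun i (y : ι → X) => f (y i)) (.pi fun _ => P) :=
    ProbabilityTheory.iIndepFun_pi fun _ => hf.aemeasurable
  rw [ProbabilityTheory.lintegral_prod_eq_prod_lintegral_of_indepFun _ _ indep (by fun_prop)]
  simp [fun i : ι => (measurePreserving_eval (fun _ : ι => P) i).lintegral_comp hf]

lemma lintegral_doubleSampleWeight [MeasurableSpace X] (P : Measure X) [IsProbabilityMeasure P]
    {R : Set X} (hR : MeasurableSet R) (x : ι → X) :
    ∫⁻ y, doubleSampleWeight t R (fun i => (x i, y i)) ∂(.pi fun _ => P) =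
      ((1 - t : ℝ≥0) : ℝ≥0∞) ^ {i | x i ∈ R}.ncard * (1 + t * P R) ^ Fintype.card ι := by
  classical
  let f : X → ℝ≥0 := R.indicator fun _ => t
  have hf : Measurable f := measurable_const.indicator hR
  have prod_one_sub : ∏ i, ((1 - f (x i) : ℝ≥0) : ℝ≥0∞) =
      ((1 - t : ℝ≥0) : ℝ≥0∞) ^ {i | x i ∈ R}.ncard := by
    have : ∀ i, ((1 - f (x i) : ℝ≥0) : ℝ≥0∞) = if x i ∈ R then ((1 - t : ℝ≥0) : ℝ≥0∞) else 1 := by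
      intro i
      by_cases hi : x i ∈ R <;> simp [f, hi]
    simp [this, Finset.prod_ite, Set.ncard_eq_toFinset_card']
  have lintegral_one_add : ∫⁻ a, (1 + f a : ℝ≥0∞) ∂P = 1 + t * P R := by
    have : ∀ a, (f a : ℝ≥0∞) = R.indicator (fun _ => (t : ℝ≥0∞)) a := by
      intro a
      by_cases ha : a ∈ R <;> simp [f, ha]
    rw [lintegral_add_left measurable_const, lintegral_congr this, lintegral_indicator_const hR]
    simp
  simp only [doubleSampleWeight, ENNReal.coe_mul, ENNReal.coe_add, ENNReal.coe_one,
    Finset.prod_mul_distrib]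
  rw [lintegral_const_mul _ (by fun_prop), ← lintegral_one_add,
    ← lintegral_prod_pi_const P (by fun_prop), ← prod_one_sub]

end Weight

section Deviation

variable {X ι : Type*} [Fintype ι]

lemma exp_le_two_thirds_pow_mul {n k : ℕ} {α p : ℝ} (hα : 0 ≤ α) (hαp : 2 * α ≤ p) (hp : p ≤ 1)
    (hk : k ≤ α * n) : Real.exp (α * n / 7) ≤ (2 / 3) ^ k * (1 + p / 3) ^ n := by
  have exp_le_two_thirds : Real.exp (-(21 / 50)) ≤ 2 / 3 := by
    rw [Real.exp_neg, inv_le_comm₀ (Real.exp_pos _) (by norm_num)]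
    linarith [Real.quadratic_le_exp_of_nonneg (x := 21 / 50) (by norm_num)]
  have exp_le_one_add : Real.exp (4 * α / 7) ≤ 1 + p / 3 := by
    calc Real.exp (4 * α / 7) ≤ 1 + 2 * α / 3 := by
          rw [← Real.le_log_iff_exp_le (by positivity)]
          refine le_trans ?_ (Real.le_log_one_add_of_nonneg (by positivity))
          rw [le_div_iff₀ (by positivity)]
          nlinarith
      _ ≤ 1 + p / 3 := by linarith
  calc Real.exp (α * n / 7) ≤ Real.exp (k * -(21 / 50) + n * (4 * α / 7)) :=
        Real.exp_le_exp.2 (by nlinarith [mul_nonneg hα n.cast_nonneg])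
    _ = Real.exp (-(21 / 50)) ^ k * Real.exp (4 * α / 7) ^ n := by
        rw [Real.exp_add, Real.exp_nat_mul, Real.exp_nat_mul]
    _ ≤ (2 / 3) ^ k * (1 + p / 3) ^ n := by gcongr

lemma exp_le_lintegral_doubleSampleWeight [MeasurableSpace X] (P : Measure X)
    [IsProbabilityMeasure P] {R : Set X} (hR : MeasurableSet R) {α : ℝ} (hα : 0 ≤ α)
    (hP : 2 * α ≤ P.real R) {x : ι → X} (hx : {i | x i ∈ R}.ncard ≤ α * Fintype.card ι) :
    ENNReal.ofReal (Real.exp (α * Fintype.card ι / 7)) ≤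
      ∫⁻ y, doubleSampleWeight (1 / 3) R (fun i => (x i, y i)) ∂(.pi fun _ => P) := by
  have one_sub_third : ((1 - 1 / 3 : ℝ≥0) : ℝ) = 2 / 3 := by
    rw [NNReal.coe_sub (div_le_one_of_le₀ (by norm_num) zero_le)]
    norm_num
  rw [lintegral_doubleSampleWeight P hR]
  refine ENNReal.ofReal_le_of_le_toReal ?_
  have key := exp_le_two_thirds_pow_mul hα hP measureReal_le_one hx
  rw [ENNReal.toReal_mul, ENNReal.toReal_pow, ENNReal.toReal_pow, ENNReal.coe_toReal, one_sub_third,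
    ENNReal.toReal_add (by finiteness) (by finiteness), ENNReal.toReal_mul]
  simpa [Measure.real, div_eq_inv_mul] using key

variable [Countable X] [MeasurableSpace X] [MeasurableSingletonClass X]

lemma lintegral_lintegral_iSup_doubleSampleWeight_le (P : Measure X) [IsProbabilityMeasure P]
    {t : ℝ≥0} (ht : t ≤ 1) {𝓡 : Set (Set X)} {N : ℕ}
    (hN : ∀ A : Finset X, #A ≤ 2 * Fintype.card ι → (traces 𝓡 A).ncard ≤ N) :
    ∫⁻ x, ∫⁻ y, ⨆ R ∈ 𝓡, doubleSampleWeight t R (fun i : ι => (x i, y i)) ∂(.pi fun _ => P)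
      ∂(.pi fun _ => P) ≤ N := by
  classical
  let F : (ι → X × X) → ℝ≥0∞ := fun z => ⨆ R ∈ 𝓡, doubleSampleWeight t R z
  let e := MeasurableEquiv.arrowProdEquivProdArrow X X ι
  have he : MeasurePreserving e.symm _ _ :=
    (measurePreserving_arrowProdEquivProdArrow X X ι (fun _ => P) (fun _ => P)).symm e
  have hF : Measurable F := measurable_of_countable F
  calc ∫⁻ x, ∫⁻ y, F (fun i => (x i, y i)) ∂(.pi fun _ => P) ∂(.pi fun _ => P)
      = ∫⁻ q, F (e.symm q) ∂((Measure.pi fun _ => P).prod (.pi fun _ => P)) :=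
        (lintegral_prod _ (hF.comp e.symm.measurable).aemeasurable).symm
    _ = ∫⁻ z, F z ∂(.pi fun _ => P.prod P) := he.lintegral_comp hF
    _ ≤ N := lintegral_le_of_sum_swapPairs_le P hF (sum_iSup_doubleSampleWeight_swapPairs_le ht hN)

theorem exp_mul_measureReal_exists_ncard_le_le (P : Measure X) [IsProbabilityMeasure P]
    {𝓡 : Set (Set X)} {N : ℕ}
    (hN : ∀ A : Finset X, #A ≤ 2 * Fintype.card ι → (traces 𝓡 A).ncard ≤ N) {α : ℝ} (hα : 0 ≤ α) :
    Real.exp (α * Fintype.card ι / 7) * (Measure.pi fun _ : ι => P).real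
      {x | ∃ R ∈ 𝓡, 2 * α < P.real R ∧ {i | x i ∈ R}.ncard ≤ α * Fintype.card ι} ≤ N := by
  set μ := Measure.pi fun _ : ι => P
  set B : Set (ι → X) := {x | ∃ R ∈ 𝓡, 2 * α < P.real R ∧ {i | x i ∈ R}.ncard ≤ α * Fintype.card ι}
  set E := Real.exp (α * Fintype.card ι / 7)
  let G : (ι → X) → ℝ≥0∞ := fun x =>
    ∫⁻ y, ⨆ R ∈ 𝓡, doubleSampleWeight (1 / 3) R (fun i => (x i, y i)) ∂μ
  have B_subset : B ⊆ {x | ENNReal.ofReal E ≤ G x} := by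
    rintro x ⟨R, hR, hPR, hxR⟩
    exact (exp_le_lintegral_doubleSampleWeight P R.to_countable.measurableSet hα hPR.le hxR).trans
      <| lintegral_mono fun y => le_iSup₂_of_le R hR le_rfl
  have markov : ENNReal.ofReal E * μ B ≤ N :=
    calc ENNReal.ofReal E * μ B ≤ ENNReal.ofReal E * μ {x | ENNReal.ofReal E ≤ G x} := by gcongr
      _ ≤ ∫⁻ x, G x ∂μ := mul_meas_ge_le_lintegral (measurable_of_countable G) _
      _ ≤ N := lintegral_lintegral_iSup_doubleSampleWeight_le P
        (div_le_one_of_le₀ (by norm_num) zero_le) hN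
  simpa [Measure.real, E, Real.exp_nonneg] using ENNReal.toReal_mono (by finiteness) markov

end Deviation

lemma log_add_one_le {x : ℝ} (hx : 8 ≤ x) : Real.log (x + 1) ≤ 8 / 7 * Real.log x := by
  have one_le_log : 1 ≤ Real.log x := by
    rw [Real.le_log_iff_exp_le (by linarith)]
    linarith [Real.exp_one_lt_d9]
  have hx_inv : 1 / x ≤ 1 / 7 := one_div_le_one_div_of_le (by norm_num) (by linarith)
  calc Real.log (x + 1) = Real.log x + Real.log (1 + 1 / x) := by
        rw [← Real.log_mul (by linarith) (by positivity)]
        congr 1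
        field_simp
    _ ≤ Real.log x + 1 / x := by
        linarith [Real.log_le_sub_one_of_pos (x := 1 + 1 / x) (by positivity)]
    _ ≤ 8 / 7 * Real.log x := by linarith

lemma two_mul_add_one_pow_le {n K : ℕ} (hn : 1 ≤ n) {α δ : ℝ} (hδ0 : 0 < δ) (hδ1 : δ ≤ 1)
    (hα1 : α ≤ 1 / 2)
    (hα : 8 / (n : ℝ) * (K * Real.log (2 * n) + Real.log (8 / δ)) ≤ α) :
    (2 * n + 1 : ℝ) ^ K ≤ δ * Real.exp (α * n / 7) := by
  have hn_pos : (0 : ℝ) < n := by exact_mod_cast hn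
  have hα_mul : 8 * (K * Real.log (2 * n) + Real.log (8 / δ)) ≤ α * n := by
    rwa [div_mul_eq_mul_div, div_le_iff₀ hn_pos] at hα
  have log_nonneg : 0 ≤ Real.log (2 * n) := Real.log_nonneg (by exact_mod_cast by omega)
  have log_eight_div : Real.log (8 / δ) = 3 * Real.log 2 - Real.log δ := by
    rw [Real.log_div (by norm_num) hδ0.ne', show (8 : ℝ) = 2 ^ 3 by norm_num, Real.log_pow]
    norm_cast
  have log_two : 0.6931471803 < Real.log 2 := Real.log_two_gt_d9
  have log_delta : Real.log δ ≤ 0 := Real.log_nonpos hδ0.le hδ1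
  have eight_le : (8 : ℝ) ≤ 2 * n := by
    nlinarith [mul_nonneg K.cast_nonneg log_nonneg]
  have exponent_le : K * Real.log (2 * n + 1) ≤ Real.log δ + α * n / 7 := by
    nlinarith [mul_le_mul_of_nonneg_left (log_add_one_le eight_le) K.cast_nonneg]
  calc (2 * n + 1 : ℝ) ^ K = Real.exp (K * Real.log (2 * n + 1)) := by
        rw [Real.exp_nat_mul, Real.exp_log (by positivity)]
    _ ≤ Real.exp (Real.log δ + α * n / 7) := Real.exp_le_exp.2 exponent_le
    _ = δ * Real.exp (α * n / 7) := by rw [Real.exp_add, Real.exp_log hδ0]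

theorem measureReal_exists_rejectionRegions_le {X ι τ : Type*} [Countable X] [MeasurableSpace X]
    [MeasurableSingletonClass X] [Fintype ι] [Nonempty ι] [Fintype τ] {C : Set (X → Bool)} {d : ℕ}
    (hC : ∀ A : Finset X, Shatters C A → #A ≤ d) {α δ : ℝ} (hδ0 : 0 < δ)
    (hα : 8 / (Fintype.card ι : ℝ) * (d * (Fintype.card τ + 1) * Real.log (2 * Fintype.card ι) +
      Real.log (8 / δ)) ≤ α) (P : Measure X) [IsProbabilityMeasure P] :
    (Measure.pi fun _ : ι => P).real {x | ∃ R ∈ rejectionRegions C τ,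
      2 * α < P.real R ∧ {i | x i ∈ R}.ncard / (Fintype.card ι : ℝ) ≤ α} ≤ δ := by
  set n := Fintype.card ι
  have hn : 1 ≤ n := Fintype.card_pos
  simp only [div_le_iff₀ (show (0 : ℝ) < n by positivity)]
  set μ := Measure.pi fun _ : ι => P
  set B : Set (ι → X) := {x | ∃ R ∈ rejectionRegions C τ,
    2 * α < P.real R ∧ {i | x i ∈ R}.ncard ≤ α * n}
  by_contra! hB
  have hδ1 : δ ≤ 1 := hB.le.trans measureReal_le_one
  obtain ⟨_, R, _, hPR, _⟩ : B.Nonempty := nonempty_of_measureReal_ne_zero (hδ0.trans hB).ne'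
  have hα1 : α ≤ 1 / 2 := by linarith [measureReal_le_one (μ := P) (s := R)]
  have hα0 : 0 ≤ α := by
    have log_nonneg : 0 ≤ Real.log (2 * n) := Real.log_nonneg (by norm_cast; omega)
    have log_div_nonneg : 0 ≤ Real.log (8 / δ) :=
      Real.log_nonneg ((one_le_div hδ0).2 (by linarith))
    exact le_trans (by positivity) hα
  have lower : (2 * n + 1 : ℝ) ^ (d * (Fintype.card τ + 1)) ≤ δ * Real.exp (α * n / 7) :=
    two_mul_add_one_pow_le hn hδ0 hδ1 hα1 (by exact_mod_cast hα)
  have upper : Real.exp (α * n / 7) * μ.real B ≤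
      (2 * n + 1 : ℝ) ^ (d * (Fintype.card τ + 1)) := by
    exact_mod_cast exp_mul_measureReal_exists_ncard_le_le P
      (fun A hA => ncard_traces_rejectionRegions_le_pow hC hA) hα0
  nlinarith [Real.exp_pos (α * n / 7)]

theorem stmt10_general {X : Type*} [Countable X] [MeasurableSpace X] [MeasurableSingletonClass X]
    (C : Set (X → Bool)) (d : ℕ) (hC : ∀ A : Finset X, Shatters C A → A.card ≤ d)
    (n T : ℕ) (hn : 1 ≤ n) (δ : ℝ) (hδ0 : 0 < δ) (P : Measure X) [IsProbabilityMeasure P] (α : ℝ)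
    (hα : (8 / (n : ℝ)) *
      ((d : ℝ) * ((T : ℝ) + 1) * Real.log (2 * n) + Real.log (8 / δ)) ≤ α) :
    ((Measure.pi fun _ : Fin n => P)
      {x : Fin n → X | ∃ h ∈ C, ∃ c : Fin T → X → Bool, (∀ i, c i ∈ C) ∧
        2 * α < (P {a : X | ∀ j, c j a = h a}ᶜ).toReal ∧
        (Set.ncard {i : Fin n | x i ∉ {a : X | ∀ j, c j a = h a}} : ℝ) / n ≤ α}).toReal
      ≤ δ := by
  have : Nonempty (Fin n) := ⟨⟨0, hn⟩⟩
  have key := measureReal_exists_rejectionRegions_le (ι := Fin n) (τ := Fin T) hC hδ0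
    (by simpa only [Fintype.card_fin] using hα) P
  simp only [exists_mem_rejectionRegions, Fintype.card_fin] at key
  exact key

/-- for a class `C` of VC dimension `d ≥ 2`, `n ≥ 1`, `T ≥ 1`,
`δ ∈ (0,1]`, distribution `P`, and `α ≥ (8/n)(d(T+1)ln(2n) + ln(8/δ))`: the probability
over `x ∼ Pⁿ` that some `h ∈ C`, `c ∈ C^T` have `rej_P(S(h,c)) > 2α` and
`rej_x(S(h,c)) ≤ α` is at most `δ`. -/
theorem stmt10 {X : Type*} [Countable X] [MeasurableSpace X] [MeasurableSingletonClass X]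
    (C : Set (X → Bool)) (d : ℕ) (hd : 2 ≤ d) (hC : VCDim C d)
    (n T : ℕ) (hn : 1 ≤ n) (hT : 1 ≤ T)
    (δ : ℝ) (hδ0 : 0 < δ) (hδ1 : δ ≤ 1)
    (P : Measure X) [IsProbabilityMeasure P] (α : ℝ)
    (hα : (8 / (n : ℝ)) *
      ((d : ℝ) * ((T : ℝ) + 1) * Real.log (2 * n) + Real.log (8 / δ)) ≤ α) :
    ((Measure.pi fun _ : Fin n => P)
      {x : Fin n → X | ∃ h ∈ C, ∃ c : Fin T → X → Bool, (∀ i, c i ∈ C) ∧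
        2 * α < (P {a : X | ∀ j, c j a = h a}ᶜ).toReal ∧
        (Set.ncard {i : Fin n | x i ∉ {a : X | ∀ j, c j a = h a}} : ℝ) / n ≤ α}).toReal
      ≤ δ :=
  stmt10_general C d hC.2 n T hn δ hδ0 P α hα
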